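/- Uniqueness part of the wellposedness theorem for the limiting transport equation: if (ν_t)_{t≥0} is a family of finite Borel measures on ℝ² such that t ↦ ν_t is continuous in the topology of weak convergence of finite measures, ν_0 = 0, and for every continuously differentiable f : ℝ × ℝ² → ℝ with compact support contained in (0,∞) × ℝ² one has ∫₀^∞ ∫_{ℝ²} ∂_t f(t,x) ν_t(dx) dt + ∫₀^∞ ∫_{ℝ²} q · ∇_x f(t,x) ν_t(dx) dt + α ∫₀^∞ f(t,e) dt = 0, then for every t ≥ 0, ν_t equals the measure μ_t(A) = α ∫₀^t 1_A(e + q s) ds. -/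

import Mathlib

open MeasureTheory Filter
open scoped ENNReal NNReal

/-!
The equation is solved along characteristics. Fix `T ≥ 0` and a `C²` compactly supported
`χ : ℝ² → ℝ`. Testing against `f (t, x) = ψ t * χ (x + (T - t) q)`, with `ψ` a test function on
`(0, ∞)`, makes the transport terms cancel, since `χ (x + (T - t) q)` is constant along
`x' = q`. What remains says that `H t = ∫ χ (x + (T - t) q) ν_t(dx)` has weak derivative
`α χ (e + (T - t) q)`. As `H` is continuous (`continuousOn_integral_translate`) and `H 0 = 0`,
the du Bois-Reymond lemma (`eq_of_forall_integral_deriv_mul_eq_zero`) gives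
`H T = α ∫₀ᵀ χ (e + (T - s) q) ds`, that is `∫ χ dν_T = ∫ χ dμ_T`. Such integrals determine a
finite measure (`measure_eq_of_forall_integral_contDiff_eq`).
-/

/-! ### The du Bois-Reymond lemma on the half-line -/

open Set Topology in
/-- A function continuous on `[0, ∞)` that vanishes after some time is integrable there. -/
lemma integrableOn_Ioi_of_continuousOn_of_eventually_zero {F : ℝ → ℝ} {b : ℝ}
    (hF : ContinuousOn F (Ici 0)) (h0 : ∀ t, b < t → F t = 0) :
    IntegrableOn F (Ioi 0) := by
  have h1 : IntegrableOn F (Icc 0 b) :=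
    (hF.mono Icc_subset_Ici_self).integrableOn_Icc
  refine h1.of_forall_sdiff_eq_zero measurableSet_Ioi ?_
  rintro t ⟨ht, ht'⟩
  refine h0 t ?_
  by_contra hb
  exact ht' ⟨le_of_lt ht, not_lt.1 hb⟩

open Set Topology in
lemma exists_Icc_of_tsupport_subset_Ioi {η : ℝ → ℝ} (hc : HasCompactSupport η)
    (hs : tsupport η ⊆ Ioi 0) : ∃ a b : ℝ, 0 < a ∧ tsupport η ⊆ Icc a b := by
  rcases (tsupport η).eq_empty_or_nonempty with h | h
  · exact ⟨1, 1, one_pos, by simp [h]⟩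
  · obtain ⟨a, ha⟩ := hc.isCompact.exists_isLeast h
    obtain ⟨b, hb⟩ := hc.isCompact.exists_isGreatest h
    exact ⟨a, b, hs ha.1, fun x hx => ⟨ha.2 hx, hb.2 hx⟩⟩

open Set Topology in
lemma eq_zero_of_tsupport_subset_Icc {η : ℝ → ℝ} {a b : ℝ} (hs : tsupport η ⊆ Icc a b) {t : ℝ}
    (ht : t ∉ Icc a b) : η t = 0 :=
  image_eq_zero_of_notMem_tsupport fun h => ht (hs h)

open Set Topology in
/-- A test function on `(0, ∞)` with zero mean is the derivative of a test function on
`(0, ∞)`. -/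
lemma exists_primitive_of_integral_eq_zero {η : ℝ → ℝ} (hη : Continuous η)
    (hc : HasCompactSupport η) (hs : tsupport η ⊆ Ioi 0) (h0 : ∫ t in Ioi (0 : ℝ), η t = 0) :
    ∃ ψ : ℝ → ℝ, ContDiff ℝ 1 ψ ∧ HasCompactSupport ψ ∧ tsupport ψ ⊆ Ioi 0 ∧ deriv ψ = η := by
  obtain ⟨a, b, ha, hab⟩ := exists_Icc_of_tsupport_subset_Ioi hc hs
  have hd : ∀ t, HasDerivAt (fun t => ∫ s in (0 : ℝ)..t, η s) (η t) t := fun t =>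
    intervalIntegral.integral_hasDerivAt_right (hη.intervalIntegrable _ _)
      (hη.stronglyMeasurableAtFilter _ _) hη.continuousAt
  have hderiv : deriv (fun t => ∫ s in (0 : ℝ)..t, η s) = η := funext fun t => (hd t).deriv
  have hint : Integrable η := hη.integrable_of_hasCompactSupport hc
  have hzero : ∀ t, t ∉ Icc a b → ∫ s in (0 : ℝ)..t, η s = 0 := by
    intro t ht
    by_cases hta : t < a
    · rw [intervalIntegral.integral_congr (g := fun _ => (0 : ℝ))]
      · simp
      · intro s hs
        refine eq_zero_of_tsupport_subset_Icc hab fun h => ?_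
        rcases mem_uIcc.1 hs with h' | h' <;> linarith [h.1, h'.1, h'.2]
    · have htb : b < t := by
        by_contra hb
        exact ht ⟨not_lt.1 hta, not_lt.1 hb⟩
      rw [intervalIntegral.integral_of_le (by linarith [not_lt.1 hta])]
      refine Eq.trans ?_ h0
      refine setIntegral_eq_of_subset_of_forall_sdiff_eq_zero measurableSet_Ioi
        Ioc_subset_Ioi_self ?_ |>.symm
      rintro s ⟨hs, hs'⟩
      refine eq_zero_of_tsupport_subset_Icc hab fun h => hs' ⟨hs, by linarith [h.2]⟩
  have hsub : tsupport (fun t => ∫ s in (0 : ℝ)..t, η s) ⊆ Icc a b := by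
    refine closure_minimal (fun t ht => ?_) isClosed_Icc
    by_contra h
    exact ht (hzero t h)
  refine ⟨_, ?_, HasCompactSupport.of_support_subset_isCompact isCompact_Icc
    (subset_closure.trans hsub), hsub.trans fun t ht => ha.trans_le ht.1, hderiv⟩
  rw [contDiff_one_iff_deriv, hderiv]
  exact ⟨fun t => (hd t).differentiableAt, hη⟩

open Set Topology in
/-- The du Bois-Reymond lemma on `(0, ∞)`: a continuous function with vanishing weak derivative
is constant on `[0, ∞)`, the boundary point `0` being reached by continuity. -/
lemma eq_of_forall_integral_deriv_mul_eq_zero {K : ℝ → ℝ} (hK : ContinuousOn K (Ici 0))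
    (h : ∀ ψ : ℝ → ℝ, ContDiff ℝ 1 ψ → HasCompactSupport ψ → tsupport ψ ⊆ Ioi 0 →
      ∫ t in Ioi (0 : ℝ), deriv ψ t * K t = 0) :
    ∀ t, 0 ≤ t → K t = K 0 := by
  have hint : ∀ g : ℝ → ℝ, Continuous g → HasCompactSupport g → tsupport g ⊆ Ioi 0 →
      ∀ F : ℝ → ℝ, ContinuousOn F (Ici 0) → IntegrableOn (fun t => g t * F t) (Ioi 0) := by
    intro g hg hgc hgs F hF
    obtain ⟨a, b, -, hab⟩ := exists_Icc_of_tsupport_subset_Ioi hgc hgs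
    refine integrableOn_Ioi_of_continuousOn_of_eventually_zero (b := b)
      (hg.continuousOn.mul hF) fun t ht => ?_
    rw [eq_zero_of_tsupport_subset_Icc hab fun h => absurd h.2 (not_le.2 ht), zero_mul]
  let B : ContDiffBump (1 : ℝ) := ⟨1 / 4, 1 / 2, by norm_num, by norm_num⟩
  set ρ : ℝ → ℝ := B.normed volume with hρ
  have hρc : Continuous ρ := B.continuous_normed
  have hρs : HasCompactSupport ρ := B.hasCompactSupport_normed
  have hρt : tsupport ρ ⊆ Ioi 0 := by
    rw [hρ, B.tsupport_normed_eq, Real.closedBall_eq_Icc]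
    intro t ht
    have : (1 : ℝ) - 1 / 2 ≤ t := ht.1
    simp only [mem_Ioi]
    linarith
  have hρ1 : ∫ t in Ioi (0 : ℝ), ρ t = 1 := by
    rw [setIntegral_eq_integral_of_forall_compl_eq_zero]
    · exact B.integral_normed
    · exact fun t ht => image_eq_zero_of_notMem_tsupport fun h => ht (hρt h)
  set c := ∫ t in Ioi (0 : ℝ), ρ t * K t with hcdef
  have hae : ∀ᵐ t, t ∈ Ioi (0 : ℝ) → K t - c = 0 := by
    refine isOpen_Ioi.ae_eq_zero_of_integral_contDiff_smul_eq_zero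
      (((hK.mono Ioi_subset_Ici_self).sub continuousOn_const).locallyIntegrableOn
        measurableSet_Ioi) fun g hg hgc hgs => ?_
    -- Subtracting a multiple of `ρ` turns `g` into a test function of zero mean.
    set m := ∫ t in Ioi (0 : ℝ), g t with hm
    have hgi : IntegrableOn g (Ioi 0) :=
      (hg.continuous.integrable_of_hasCompactSupport hgc).integrableOn
    have hρi : IntegrableOn ρ (Ioi 0) :=
      (hρc.integrable_of_hasCompactSupport hρs).integrableOn
    obtain ⟨ψ, h1, h2, h3, h4⟩ := exists_primitive_of_integral_eq_zero
      (η := g - fun t => m * ρ t) (hg.continuous.sub (hρc.const_mul m))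
      (hgc.sub hρs.mul_left)
      ((tsupport_sub g _).trans (union_subset hgs
        ((closure_mono (Function.support_mul_subset_right _ _)).trans hρt)))
      (by
        simp only [Pi.sub_apply]
        rw [integral_sub hgi (hρi.const_mul m), integral_const_mul, hρ1, mul_one, sub_self])
    have h5 := h ψ h1 h2 h3
    simp only [h4, Pi.sub_apply, sub_mul, mul_assoc] at h5
    rw [integral_sub (hint g hg.continuous hgc hgs K hK)
      ((hint ρ hρc hρs hρt K hK).const_mul m), integral_const_mul, ← hcdef] at h5
    have h6 : ∫ t, g t • (K t - c) = ∫ t in Ioi (0 : ℝ), (g t * K t - g t * c) := by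
      rw [← setIntegral_eq_integral_of_forall_compl_eq_zero (s := Ioi (0 : ℝ))]
      · simp only [smul_eq_mul, mul_sub]
      · intro t ht
        rw [image_eq_zero_of_notMem_tsupport fun h => ht (hgs h), zero_smul]
    rw [h6, integral_sub (hint g hg.continuous hgc hgs K hK) (hgi.mul_const c),
      integral_mul_const]
    exact h5
  have hon : EqOn K (fun _ => c) (Ioi 0) := by
    refine Measure.eqOn_open_of_ae_eq (μ := volume) ?_ isOpen_Ioi (hK.mono Ioi_subset_Ici_self)
      continuousOn_const
    rw [Filter.EventuallyEq, ae_restrict_iff' measurableSet_Ioi]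
    filter_upwards [hae] with t ht h0
    exact sub_eq_zero.1 (ht h0)
  have hon' : EqOn K (fun _ => c) (Ici 0) :=
    hon.of_subset_closure hK continuousOn_const Ioi_subset_Ici_self (by rw [closure_Ioi])
  intro t ht
  rw [hon' ht, hon' (mem_Ici.2 le_rfl)]

/-! ### Finite measures and test functions -/

open Set Topology in
/-- Finite measures on `ℝ²` are determined by their integrals of `C²` compactly supported
functions: both are compared through their densities with respect to their sum. -/
lemma measure_eq_of_forall_integral_contDiff_eq {μ ν : Measure (ℝ × ℝ)} [IsFiniteMeasure μ]
    [IsFiniteMeasure ν]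
    (h : ∀ g : ℝ × ℝ → ℝ, ContDiff ℝ 2 g → HasCompactSupport g → ∫ x, g x ∂μ = ∫ x, g x ∂ν) :
    μ = ν := by
  have hμ : μ ≪ μ + ν := Measure.absolutelyContinuous_of_le (Measure.le_add_right le_rfl)
  have hν : ν ≪ μ + ν := Measure.absolutelyContinuous_of_le (Measure.le_add_left le_rfl)
  have hm : IsFiniteMeasure (μ + ν) := inferInstance
  generalize μ + ν = m at hμ hν hm
  have key : ∀ᵐ x ∂m, (μ.rnDeriv m x).toReal = (ν.rnDeriv m x).toReal := by
    refine ae_eq_of_integral_contDiff_smul_eq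
      Measure.integrable_toReal_rnDeriv.locallyIntegrable
      Measure.integrable_toReal_rnDeriv.locallyIntegrable fun g hg hgc => ?_
    have h1 := integral_rnDeriv_smul (f := g) hμ
    have h2 := integral_rnDeriv_smul (f := g) hν
    simp only [smul_eq_mul] at h1 h2 ⊢
    simp only [mul_comm (g _), h1, h2]
    exact h g (hg.of_le (WithTop.coe_le_coe.2 (le_top : (2 : ℕ∞) ≤ ⊤))) hgc
  rw [← Measure.withDensity_rnDeriv_eq μ m hμ, ← Measure.withDensity_rnDeriv_eq ν m hν]
  refine withDensity_congr_ae ?_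
  filter_upwards [key, Measure.rnDeriv_lt_top μ m, Measure.rnDeriv_lt_top ν m]
    with x hx h1 h2
  exact (ENNReal.toReal_eq_toReal_iff' h1.ne h2.ne).1 hx

open Set Topology in
/-- Integrals of a test function translated at speed `q` depend continuously on time: weak
continuity handles the measure and uniform continuity the test function. -/
lemma continuousOn_integral_translate (q : ℝ × ℝ) (T : ℝ)
    (ν : ℝ → Measure (ℝ × ℝ)) (hfin : ∀ t, IsFiniteMeasure (ν t))
    (hcont : ∀ g : BoundedContinuousFunction (ℝ × ℝ) ℝ,
      ContinuousOn (fun t : ℝ => ∫ x, g x ∂(ν t)) (Set.Ici 0))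
    {χ : ℝ × ℝ → ℝ} (hχ : Continuous χ) (hχc : HasCompactSupport χ) :
    ContinuousOn (fun t => ∫ x, χ (x + (T - t) • q) ∂(ν t)) (Ici 0) := by
  have huc : UniformContinuous χ := hχc.uniformContinuous_of_continuous hχ
  obtain ⟨C, hC⟩ := hχc.exists_bound_of_continuous hχ
  intro t₀ ht₀
  have hint : ∀ s t, Integrable (fun x => χ (x + (T - s) • q)) (ν t) := fun s t =>
    Integrable.of_bound (by fun_prop) C (.of_forall fun x => hC _)
  have hmass : Tendsto (fun t => (ν t).real univ) (𝓝[Ici 0] t₀) (𝓝 ((ν t₀).real univ)) := by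
    have := hcont (BoundedContinuousFunction.const _ 1) t₀ ht₀
    simpa [ContinuousWithinAt] using this
  have hfix : Tendsto (fun t => ∫ x, χ (x + (T - t₀) • q) ∂(ν t)) (𝓝[Ici 0] t₀)
      (𝓝 (∫ x, χ (x + (T - t₀) • q) ∂(ν t₀))) :=
    hcont (BoundedContinuousFunction.ofNormedAddCommGroup (fun x => χ (x + (T - t₀) • q))
      (by fun_prop) C fun x => hC _) t₀ ht₀
  have hdiff : Tendsto (fun t => ∫ x, χ (x + (T - t) • q) ∂(ν t) -
      ∫ x, χ (x + (T - t₀) • q) ∂(ν t)) (𝓝[Ici 0] t₀) (𝓝 0) := by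
    rw [Metric.tendsto_nhds]
    intro ε hε
    set M := (ν t₀).real univ + 1 with hM
    have hM0 : 0 < M := by positivity
    obtain ⟨δ, hδ, hδχ⟩ := Metric.uniformContinuous_iff.1 huc (ε / (2 * M)) (by positivity)
    have hq : Tendsto (fun t : ℝ => ‖(t₀ - t) • q‖) (𝓝[Ici 0] t₀) (𝓝 0) := by
      have : Continuous fun t : ℝ => ‖(t₀ - t) • q‖ := by fun_prop
      simpa using (this.tendsto t₀).mono_left nhdsWithin_le_nhds
    filter_upwards [hq.eventually_lt_const hδ,
      hmass.eventually_lt_const (lt_add_one ((ν t₀).real univ))]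
      with t ht htm
    rw [dist_zero_right, ← integral_sub (hint t t) (hint t₀ t)]
    have hb : ∀ x, ‖χ (x + (T - t) • q) - χ (x + (T - t₀) • q)‖ ≤ ε / (2 * M) := by
      intro x
      rw [← dist_eq_norm]
      refine (hδχ ?_).le
      rw [dist_eq_norm]
      have hxt : x + (T - t) • q - (x + (T - t₀) • q) = (t₀ - t) • q := by module
      rwa [hxt]
    calc _ ≤ ε / (2 * M) * (ν t).real univ :=
          norm_integral_le_of_norm_le_const (.of_forall hb)
      _ ≤ ε / (2 * M) * M := by gcongr
      _ < ε := by
          have : ε / (2 * M) * M = ε / 2 := by field_simp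
          linarith
  have := hdiff.add hfix
  simpa [ContinuousWithinAt] using this

/-! ### Uniqueness for the transport equation -/

/-- uniqueness part of wellposedness. If `(ν_t)_{t≥0}` is a family of
finite Borel measures on `ℝ²`, weakly continuous in `t` on `[0,∞)`, with `ν_0 = 0`, and
solving the weak transport equation
`∫₀^∞ ∫ ∂_t f dν_t dt + ∫₀^∞ ∫ q·∇_x f dν_t dt + α ∫₀^∞ f(t,e) dt = 0`
for every `C¹` function `f : ℝ × ℝ² → ℝ` with compact support contained in `(0,∞) × ℝ²`,
then for every `t ≥ 0`, `ν_t` equals `μ_t(A) = α ∫₀^t 1_A(e + q s) ds`. -/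
theorem weak_transport_equation_uniqueness
    (q e : ℝ × ℝ) (α : ℝ) (hα : 0 < α)
    (ν : ℝ → Measure (ℝ × ℝ)) (hfin : ∀ t, IsFiniteMeasure (ν t))
    (hcont : ∀ g : BoundedContinuousFunction (ℝ × ℝ) ℝ,
      ContinuousOn (fun t : ℝ => ∫ x, g x ∂(ν t)) (Set.Ici 0))
    (hzero : ν 0 = 0)
    (hweak : ∀ f : ℝ × (ℝ × ℝ) → ℝ, ContDiff ℝ 1 f → HasCompactSupport f →
      tsupport f ⊆ Set.Ioi (0 : ℝ) ×ˢ Set.univ →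
      (∫ t in Set.Ioi (0 : ℝ), ∫ x, deriv (fun s => f (s, x)) t ∂(ν t))
        + (∫ t in Set.Ioi (0 : ℝ), ∫ x, fderiv ℝ (fun y => f (t, y)) x q ∂(ν t))
        + α * ∫ t in Set.Ioi (0 : ℝ), f (t, e) = 0) :
    ∀ t : ℝ, 0 ≤ t →
      ν t = ENNReal.ofReal α •
        Measure.map (fun s : ℝ => e + s • q) (volume.restrict (Set.Ioc 0 t)) := by
  intro T hT
  have := hfin T
  have hmeas : Measurable fun s : ℝ => e + s • q := by fun_prop
  have : IsFiniteMeasure (ENNReal.ofReal α •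
      Measure.map (fun s : ℝ => e + s • q) (volume.restrict (Set.Ioc 0 T))) :=
    Measure.smul_finite _ ENNReal.ofReal_ne_top
  refine measure_eq_of_forall_integral_contDiff_eq fun χ hχ hχc => ?_
  rw [integral_smul_measure, integral_map hmeas.aemeasurable
    hχ.continuous.aestronglyMeasurable, ENNReal.toReal_ofReal hα.le,
    ← intervalIntegral.integral_of_le hT, smul_eq_mul]
  -- The derivative of `χ` in direction `q`, another test function.
  set D : ℝ × ℝ → ℝ := fun x => fderiv ℝ χ x q with hD
  have hDc : Continuous D := (hχ.continuous_fderiv (by norm_num)).clm_apply continuous_const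
  have hDs : HasCompactSupport D := hχc.fderiv_apply (𝕜 := ℝ) q
  set H : ℝ → ℝ := fun t => ∫ x, χ (x + (T - t) • q) ∂(ν t) with hH
  set L : ℝ → ℝ := fun t => ∫ x, D (x + (T - t) • q) ∂(ν t) with hL
  have hHc : ContinuousOn H (Set.Ici 0) :=
    continuousOn_integral_translate q T ν hfin hcont hχ.continuous hχc
  have hLc : ContinuousOn L (Set.Ici 0) :=
    continuousOn_integral_translate q T ν hfin hcont hDc hDs
  set k : ℝ → ℝ := fun s => χ (e + (T - s) • q) with hk
  have hkc : Continuous k := hχ.continuous.comp (by fun_prop)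
  set J : ℝ → ℝ := fun t => ∫ s in (0 : ℝ)..t, k s with hJ
  have hJd : ∀ t, HasDerivAt J (k t) t := fun t =>
    intervalIntegral.integral_hasDerivAt_right (hkc.intervalIntegrable _ _)
      (hkc.stronglyMeasurableAtFilter _ _) hkc.continuousAt
  have hJc : Continuous J := continuous_iff_continuousAt.2 fun t => (hJd t).continuousAt
  have hint : ∀ g : ℝ → ℝ, Continuous g → HasCompactSupport g → ∀ F : ℝ → ℝ,
      ContinuousOn F (Set.Ici 0) → IntegrableOn (fun t => g t * F t) (Set.Ioi 0) := by
    intro g hg hgc F hF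
    obtain ⟨b, hb⟩ := hgc.isCompact.bddAbove
    refine integrableOn_Ioi_of_continuousOn_of_eventually_zero (b := b)
      (hg.continuousOn.mul hF) fun t ht => ?_
    rw [image_eq_zero_of_notMem_tsupport fun h => absurd (hb h) (not_le.2 ht), zero_mul]
  have hconst := eq_of_forall_integral_deriv_mul_eq_zero (K := fun t => H t - α * J t)
    (hHc.sub (hJc.continuousOn.const_smul α)) ?_ T hT
  · have hH0 : H 0 = 0 := by simp [hH, hzero]
    have hJ0 : J 0 = 0 := by simp [hJ]
    have hHT : H T = ∫ x, χ x ∂(ν T) := by simp [hH]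
    have hJT : J T = ∫ s in (0 : ℝ)..T, χ (e + s • q) := by
      have := intervalIntegral.integral_comp_sub_left (a := 0) (b := T)
        (fun s => χ (e + s • q)) T
      simpa [hJ, hk] using this
    simp only [hH0, hJ0, mul_zero, sub_zero] at hconst
    rw [← hHT, ← hJT]
    linarith
  intro ψ hψ hψc hψs
  have hψ' : Continuous (deriv ψ) := hψ.continuous_deriv le_rfl
  have hψd : ∀ t, HasDerivAt ψ (deriv ψ t) t := fun t =>
    (hψ.differentiable one_ne_zero t).hasDerivAt
  have hχd : Differentiable ℝ χ := hχ.differentiable two_ne_zero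
  -- The test function `ψ(t) χ(x + (T - t) q)`: its `χ`-factor is constant along characteristics.
  set f : ℝ × (ℝ × ℝ) → ℝ := fun p => ψ p.1 * χ (p.2 + (T - p.1) • q) with hf
  have hfd : ContDiff ℝ 1 f := by
    refine (hψ.comp contDiff_fst).mul ((hχ.of_le (by norm_num)).comp ?_)
    exact contDiff_snd.add ((contDiff_const.sub contDiff_fst).smul contDiff_const)
  let S : Set (ℝ × (ℝ × ℝ)) := (fun p : ℝ × (ℝ × ℝ) => (p.1, p.2 - (T - p.1) • q)) ''
    (tsupport ψ ×ˢ tsupport χ)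
  have hS : IsCompact S := (hψc.isCompact.prod hχc.isCompact).image (by fun_prop)
  have hsub : Function.support f ⊆ S := by
    rintro ⟨t, x⟩ hp
    have hp' : ψ t * χ (x + (T - t) • q) ≠ 0 := hp
    refine ⟨(t, x + (T - t) • q), ⟨subset_closure (left_ne_zero_of_mul hp'),
      subset_closure (right_ne_zero_of_mul hp')⟩, ?_⟩
    simp
  have hft : tsupport f ⊆ Set.Ioi (0 : ℝ) ×ˢ Set.univ := by
    refine (closure_minimal hsub hS.isClosed).trans ?_
    rintro _ ⟨p, hp, rfl⟩
    exact ⟨hψs hp.1, trivial⟩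
  have hw := hweak f hfd (HasCompactSupport.of_support_subset_isCompact hS hsub) hft
  have hd1 : ∀ t x, deriv (fun s => f (s, x)) t =
      deriv ψ t * χ (x + (T - t) • q) - ψ t * D (x + (T - t) • q) := by
    intro t x
    have h1 : HasDerivAt (fun s : ℝ => x + (T - s) • q) (-q) t := by
      have := (((hasDerivAt_id t).const_sub T).smul_const q).const_add x
      simpa using this
    have h2 := (hχd (x + (T - t) • q)).hasFDerivAt.comp_hasDerivAt t h1
    have h3 := ((hψd t).mul h2).deriv
    refine Eq.trans h3 ?_
    simp [hD, sub_eq_add_neg]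
  have hd2 : ∀ t x, fderiv ℝ (fun y => f (t, y)) x q = ψ t * D (x + (T - t) • q) := by
    intro t x
    have h1 : HasFDerivAt (fun y : ℝ × ℝ => y + (T - t) • q)
      (ContinuousLinearMap.id ℝ (ℝ × ℝ)) x := (hasFDerivAt_id x).add_const _
    have h2 := ((hχd (x + (T - t) • q)).hasFDerivAt.comp x h1).const_mul (ψ t)
    have h3 : HasFDerivAt (fun y => f (t, y)) _ x := h2
    rw [h3.fderiv]
    simp [hD]
  have hiν : ∀ (g : ℝ × ℝ → ℝ), Continuous g → HasCompactSupport g → ∀ t,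
      Integrable (fun x => g (x + (T - t) • q)) (ν t) := by
    intro g hg hgc t
    have := hfin t
    obtain ⟨C, hC⟩ := hgc.exists_bound_of_continuous hg
    exact Integrable.of_bound (by fun_prop) C (.of_forall fun x => hC _)
  have e1 : ∀ t, ∫ x, deriv (fun s => f (s, x)) t ∂(ν t) = deriv ψ t * H t - ψ t * L t := by
    intro t
    simp only [hd1]
    rw [integral_sub ((hiν χ hχ.continuous hχc t).const_mul _) ((hiν D hDc hDs t).const_mul _),
      integral_const_mul, integral_const_mul]
  have e2 : ∀ t, ∫ x, fderiv ℝ (fun y => f (t, y)) x q ∂(ν t) = ψ t * L t := by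
    intro t
    simp only [hd2]
    rw [integral_const_mul]
  have e3 : ∀ t, f (t, e) = ψ t * k t := fun t => rfl
  have hparts : ∫ t in Set.Ioi (0 : ℝ), ψ t * k t = - ∫ t in Set.Ioi (0 : ℝ), deriv ψ t * J t := by
    have h0 : ∀ t, t ∉ Set.Ioi (0 : ℝ) → t ∉ tsupport ψ := fun t ht h => ht (hψs h)
    rw [setIntegral_eq_integral_of_forall_compl_eq_zero fun t ht => by
        rw [image_eq_zero_of_notMem_tsupport (h0 t ht), zero_mul],
      setIntegral_eq_integral_of_forall_compl_eq_zero fun t ht => by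
        rw [image_eq_zero_of_notMem_tsupport fun h => h0 t ht (tsupport_deriv_subset h),
          zero_mul]]
    refine integral_mul_deriv_eq_deriv_mul_of_integrable (fun t _ => hψd t) (fun t _ => hJd t)
      ?_ ?_ ?_
    · exact (hψ.continuous.mul hkc).integrable_of_hasCompactSupport hψc.mul_right
    · exact (hψ'.mul hJc).integrable_of_hasCompactSupport hψc.deriv.mul_right
    · exact (hψ.continuous.mul hJc).integrable_of_hasCompactSupport hψc.mul_right
  have i1 := hint _ hψ' hψc.deriv H hHc
  have i2 := hint _ hψ.continuous hψc L hLc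
  have i3 := hint _ hψ' hψc.deriv J hJc.continuousOn
  simp only [e1, e2, e3] at hw
  rw [integral_sub i1 i2, hparts] at hw
  have e4 : ∀ t, deriv ψ t * (H t - α * J t) = deriv ψ t * H t - α * (deriv ψ t * J t) :=
    fun t => by ring
  simp only [e4]
  rw [integral_sub i1 (i3.const_mul α), integral_const_mul]
  linarith
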